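/- arXiv:1902.07325 — 2 statements merged into one kernel-verified Lean document; each statement's English description precedes it below -/
import Mathlib

section
/- Let u and v be elements of the Tits algebra ℝΣ[𝒜] of a hyperplane arrangement 𝒜 in ℝ^n. If u is characteristic of parameter s and v is characteristic of parameter t, then the product uv is characteristic of parameter st. -/
open Finset MeasureTheory

noncomputable section

namespace CharElts

/-- Ambient Euclidean space `ℝ^n`. -/
abbrev V (n : ℕ) := EuclideanSpace ℝ (Fin n)

/-- An affine functional on `ℝ^n`; a hyperplane is its zero set. -/
abbrev AffForm (n : ℕ) := V n →ᵃ[ℝ] ℝ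

/-- The hyperplane determined by an affine functional. -/
def hypSet {n : ℕ} (ℓ : AffForm n) : Set (V n) := {x | ℓ x = 0}

variable {n : ℕ} (𝒜 : Finset (AffForm n))

/-- Index type for the hyperplanes of the arrangement. -/
abbrev Idx := {ℓ : AffForm n // ℓ ∈ 𝒜}

/-- The (possibly empty) set cut out by a sign vector `σ`. -/
def faceSet (σ : Idx 𝒜 → SignType) : Set (V n) :=
  {x | ∀ ℓ : Idx 𝒜, SignType.sign (ℓ.1 x) = σ ℓ}

/-- A face of the arrangement: a sign vector whose face set is nonempty. -/
@[ext] structure Face where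
  sgn : Idx 𝒜 → SignType
  nonempty : (faceSet 𝒜 sgn).Nonempty

open Classical in
instance : Fintype (Face 𝒜) :=
  Fintype.ofInjective Face.sgn (fun F G h => by cases F; cases G; simpa using h)

/-- The underlying point set of a face. -/
def Face.carrier (F : Face 𝒜) : Set (V n) := faceSet 𝒜 F.sgn

/-- A flat: a nonempty intersection of some subcollection of the hyperplanes
(the empty intersection gives all of `ℝ^n`). -/
def IsFlat (X : Set (V n)) : Prop :=
  X.Nonempty ∧ ∃ P : Idx 𝒜 → Prop, X = ⋂ ℓ ∈ {ℓ : Idx 𝒜 | P ℓ}, hypSet ℓ.1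

/-- The poset of flats, ordered by inclusion. -/
def Flat := {X : Set (V n) // IsFlat 𝒜 X}

instance : PartialOrder (Flat 𝒜) :=
  inferInstanceAs (PartialOrder {X : Set (V n) // IsFlat 𝒜 X})

lemma flat_eq_inter (X : Flat 𝒜) :
    X.1 = ⋂ ℓ ∈ {ℓ : Idx 𝒜 | X.1 ⊆ hypSet ℓ.1}, hypSet ℓ.1 := by
  obtain ⟨Z, hne, P, rfl⟩ := X
  apply subset_antisymm
  · intro x hx
    simp only [Set.mem_iInter, Set.mem_setOf_eq]
    intro ℓ hℓ
    exact hℓ hx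
  · intro x hx
    simp only [Set.mem_iInter, Set.mem_setOf_eq] at hx ⊢
    intro ℓ hℓ
    refine hx ℓ ?_
    intro y hy
    simp only [Set.mem_iInter, Set.mem_setOf_eq] at hy
    exact hy ℓ hℓ

open Classical in
instance : Fintype (Flat 𝒜) :=
  Fintype.ofInjective (fun X : Flat 𝒜 => {ℓ : Idx 𝒜 | X.1 ⊆ hypSet ℓ.1}) <| by
    intro X Y h
    dsimp only at h
    apply Subtype.ext
    rw [flat_eq_inter 𝒜 X, flat_eq_inter 𝒜 Y, h]

/-- The top flat: the whole ambient space. -/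
def topFlat : Flat 𝒜 :=
  ⟨Set.univ, ⟨⟨0, trivial⟩, fun _ => False, by simp⟩⟩

/-- The support of a face: the intersection of the hyperplanes on which it lies. -/
def supp (F : Face 𝒜) : Flat 𝒜 :=
  ⟨⋂ ℓ ∈ {ℓ : Idx 𝒜 | F.sgn ℓ = 0}, hypSet ℓ.1, by
    constructor
    · obtain ⟨x, hx⟩ := F.nonempty
      refine ⟨x, ?_⟩
      simp only [Set.mem_iInter, Set.mem_setOf_eq]
      intro ℓ hℓ
      have h0 := hx ℓ
      rw [hℓ] at h0
      simpa [hypSet, sign_eq_zero_iff] using h0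
    · exact ⟨fun ℓ => F.sgn ℓ = 0, rfl⟩⟩

/-- The dimension of (the affine hull of) a subset of `ℝ^n`. -/
def dimS (X : Set (V n)) : ℕ := Module.finrank ℝ (vectorSpan ℝ X)

open Classical in
/-- An element `w = Σ_F w^F H_F` of the Tits algebra (recorded by its coefficient
vector) is *characteristic of parameter `t`* if for every flat `X`, the sum of the
coefficients of the faces with support contained in `X` equals `t ^ rk X`,
where `rk X = dim X - d` and `d` is the common dimension of the minimal flats. -/
def IsCharacteristic (d : ℕ) (w : Face 𝒜 → ℝ) (t : ℝ) : Prop :=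
  ∀ X : Flat 𝒜,
    (∑ F : Face 𝒜, if (supp 𝒜 F).1 ⊆ X.1 then w F else 0) = t ^ (dimS X.1 - d)

/-- The sign vector of the Tits product `FG` of two faces. -/
def combineSgn {I : Type*} (σ τ : I → SignType) : I → SignType :=
  fun ℓ => if σ ℓ = 0 then τ ℓ else σ ℓ

open Classical in
/-- The product of the Tits algebra, on coefficient vectors:
`(u·v)^C = Σ_{F,G : FG = C} u^F v^G`, extending `H_F · H_G = H_{FG}` bilinearly. -/
def mulT (u v : Face 𝒜 → ℝ) : Face 𝒜 → ℝ :=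
  fun C => ∑ F : Face 𝒜, ∑ G : Face 𝒜,
    if combineSgn F.sgn G.sgn = C.sgn then u F * v G else 0

open Classical in
/-- The basis element `H_F` of the Tits algebra, as a coefficient vector. -/
def unitV (F : Face 𝒜) : Face 𝒜 → ℝ := fun G => if G = F then 1 else 0

/-- A chamber: a face whose sign vector is nowhere zero. -/
def IsChamber (F : Face 𝒜) : Prop := ∀ ℓ : Idx 𝒜, F.sgn ℓ ≠ 0

open Classical in
/-- `IsMoebius 𝒜 μ` states that `μ` is the Möbius function of the poset of
flats of `𝒜` (these conditions determine `μ` uniquely). -/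
def IsMoebius (μ : Flat 𝒜 → Flat 𝒜 → ℝ) : Prop :=
  (∀ X, μ X X = 1) ∧
  (∀ X Y : Flat 𝒜, X < Y →
    (∑ Z : Flat 𝒜, if X ≤ Z ∧ Z ≤ Y then μ X Z else 0) = 0) ∧
  (∀ X Y : Flat 𝒜, ¬ X ≤ Y → μ X Y = 0)

open Classical in
/-- `χ(𝒜^X, t) = Σ_{Y ≤ X} μ(Y, X) t^{rk Y}`: the characteristic polynomial of the
arrangement under the flat `X`.  Taking `X = ⊤` gives the characteristic
polynomial of `𝒜` itself. -/
def charPolyUnder (μ : Flat 𝒜 → Flat 𝒜 → ℝ) (d : ℕ) (X : Flat 𝒜) (t : ℝ) : ℝ :=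
  ∑ Y : Flat 𝒜, if Y ≤ X then μ Y X * t ^ (dimS Y.1 - d) else 0

/-- The space of directions `L = ⋂_{H ∈ 𝒜} dir(H)`: the intersection of the kernels of
the linear parts of the defining functionals. -/
def dirL : Submodule ℝ (V n) := ⨅ ℓ : Idx 𝒜, LinearMap.ker ℓ.1.linear

/-- A face is essentially bounded if its image in `ℝ^n / L` is bounded. -/
def EssBounded (F : Face 𝒜) : Prop :=
  Bornology.IsBounded ((dirL 𝒜).mkQ '' F.carrier)

/-- A hyperplane (zero set of a nonconstant affine functional) is nonempty. -/
lemma hyp_nonempty (ℓ : AffForm n) (h : ℓ.linear ≠ 0) : (hypSet ℓ).Nonempty := by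
  obtain ⟨v, hv⟩ : ∃ v, ℓ.linear v ≠ 0 := by
    by_contra hc
    push_neg at hc
    exact h (LinearMap.ext fun v => hc v)
  refine ⟨((-ℓ 0) / (ℓ.linear v)) • v, ?_⟩
  have hdecomp : ℓ (((-ℓ 0) / (ℓ.linear v)) • v)
      = ℓ.linear (((-ℓ 0) / (ℓ.linear v)) • v) + ℓ 0 := by
    conv_lhs => rw [show ((-ℓ 0) / (ℓ.linear v)) • v = ((-ℓ 0) / (ℓ.linear v)) • v +ᵥ (0 : V n)
      from (add_zero _).symm]
    rw [AffineMap.map_vadd]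
    rfl
  show ℓ _ = 0
  rw [hdecomp, LinearMap.map_smul, smul_eq_mul, div_mul_cancel₀ _ hv, neg_add_cancel]

/-!
Fix a flat `X`. The face `FG` is the one entered on moving slightly from `F` towards `G`, and a
hyperplane contains `FG` exactly when it contains both `F` and `G`. Hence `supp (FG) ⊆ X` if and
only if `supp F ⊆ X` and `supp G ⊆ X`, so that `w ↦ ∑_{supp F ⊆ X} w^F` is a character of the Tits
algebra. It sends `u` to `s ^ rk X` and `v` to `t ^ rk X`, hence `uv` to `(s t) ^ rk X`.
-/

open Filter Topology

section SignVectors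

theorem combineSgn_eq_zero_iff {I : Type*} {σ τ : I → SignType} {i : I} :
    combineSgn σ τ i = 0 ↔ σ i = 0 ∧ τ i = 0 := by
  by_cases h : σ i = 0 <;> simp [combineSgn, h]

theorem eventually_sign_eq_of_tendsto {α β : Type*} [Zero β] [LinearOrder β]
    [TopologicalSpace β] [OrderTopology β] {l : Filter α} {f : α → β} {a : β}
    (hf : Tendsto f l (𝓝 a)) (ha : a ≠ 0) :
    ∀ᶠ x in l, SignType.sign (f x) = SignType.sign a := by
  have hsign := (continuousAt_sign_of_ne_zero ha).tendsto.comp hf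
  rwa [nhds_discrete, tendsto_pure] at hsign

variable {k : Type*} [Field k] [LinearOrder k] [IsStrictOrderedRing k] [TopologicalSpace k]
  [OrderTopology k]

theorem eventually_sign_lineMap (a b : k) :
    ∀ᶠ ε in 𝓝[>] (0 : k), SignType.sign (AffineMap.lineMap a b ε : k) =
      if SignType.sign a = 0 then SignType.sign b else SignType.sign a := by
  by_cases ha : a = 0
  · filter_upwards [self_mem_nhdsWithin] with ε hε
    simp [ha, AffineMap.lineMap_apply, sign_mul, sign_pos hε]
  · have hlim : Tendsto (fun ε : k => (AffineMap.lineMap a b ε : k)) (𝓝[>] 0) (𝓝 a) := by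
      have hcont : Continuous (fun ε : k => (AffineMap.lineMap a b ε : k)) :=
        AffineMap.lineMap_continuous
      simpa using (hcont.tendsto 0).mono_left nhdsWithin_le_nhds
    simpa only [sign_eq_zero_iff, ha, if_false] using eventually_sign_eq_of_tendsto hlim ha

theorem exists_sign_eq_combineSgn {E P ι : Type*} [AddCommGroup E] [Module k E] [AddTorsor E P]
    [Finite ι] (f : ι → P →ᵃ[k] k) (x y : P) :
    ∃ z, ∀ i, SignType.sign (f i z) =
      combineSgn (fun j => SignType.sign (f j x)) (fun j => SignType.sign (f j y)) i := by
  have hlocal : ∀ᶠ ε in 𝓝[>] (0 : k), ∀ i, SignType.sign (f i (AffineMap.lineMap x y ε)) =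
      combineSgn (fun j => SignType.sign (f j x)) (fun j => SignType.sign (f j y)) i :=
    eventually_all.2 fun i => by
      simpa only [AffineMap.apply_lineMap, combineSgn] using eventually_sign_lineMap (f i x) (f i y)
  obtain ⟨ε, hε⟩ := hlocal.exists
  exact ⟨AffineMap.lineMap x y ε, hε⟩

end SignVectors

variable {𝒜}

namespace Face

/-- The Tits product `FG` of two faces, written `F * G`. -/
instance : Mul (Face 𝒜) where
  mul F G :=
    { sgn := combineSgn F.sgn G.sgn
      nonempty := by
        obtain ⟨x, hx⟩ := F.nonempty
        obtain ⟨y, hy⟩ := G.nonempty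
        rw [← funext hx, ← funext hy]
        exact exists_sign_eq_combineSgn (fun ℓ : Idx 𝒜 => ℓ.1) x y }

theorem sgn_mul (F G : Face 𝒜) : (F * G).sgn = combineSgn F.sgn G.sgn := rfl

theorem mem_hypSet_iff {F : Face 𝒜} {x : V n} (hx : x ∈ F.carrier) (ℓ : Idx 𝒜) :
    x ∈ hypSet ℓ.1 ↔ F.sgn ℓ = 0 := by
  rw [← hx ℓ, sign_eq_zero_iff]
  rfl

theorem carrier_subset_supp (F : Face 𝒜) : F.carrier ⊆ (supp 𝒜 F).1 :=
  fun _ hx => Set.mem_iInter₂.2 fun ℓ hℓ => (mem_hypSet_iff hx ℓ).2 hℓ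

theorem supp_subset_hypSet_iff (F : Face 𝒜) (ℓ : Idx 𝒜) :
    (supp 𝒜 F).1 ⊆ hypSet ℓ.1 ↔ F.sgn ℓ = 0 := by
  constructor
  · intro hsupp
    obtain ⟨x, hx⟩ := F.nonempty
    exact (mem_hypSet_iff hx ℓ).1 (hsupp (F.carrier_subset_supp hx))
  · exact fun hℓ => Set.biInter_subset_of_mem hℓ

theorem supp_subset_iff (F : Face 𝒜) (X : Flat 𝒜) :
    (supp 𝒜 F).1 ⊆ X.1 ↔ ∀ ℓ : Idx 𝒜, X.1 ⊆ hypSet ℓ.1 → F.sgn ℓ = 0 := by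
  conv_lhs => rw [flat_eq_inter 𝒜 X]
  simp only [Set.subset_iInter_iff, Set.mem_ofPred_eq, supp_subset_hypSet_iff]

theorem supp_mul_subset_iff (F G : Face 𝒜) (X : Flat 𝒜) :
    (supp 𝒜 (F * G)).1 ⊆ X.1 ↔ (supp 𝒜 F).1 ⊆ X.1 ∧ (supp 𝒜 G).1 ⊆ X.1 := by
  simp only [supp_subset_iff, sgn_mul, combineSgn_eq_zero_iff, imp_and, forall_and]

end Face

open Classical in
theorem mulT_apply (u v : Face 𝒜 → ℝ) (C : Face 𝒜) :
    mulT 𝒜 u v C = ∑ F, ∑ G, if F * G = C then u F * v G else 0 := by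
  simp only [mulT, Face.ext_iff, Face.sgn_mul]

theorem sum_ite_mulT (u v : Face 𝒜 → ℝ) (p : Face 𝒜 → Prop) [DecidablePred p] :
    ∑ C, (if p C then mulT 𝒜 u v C else 0) =
      ∑ F, ∑ G, if p (F * G) then u F * v G else 0 := by
  classical
  calc
    ∑ C, (if p C then mulT 𝒜 u v C else 0)
      = ∑ C with p C, ∑ F, ∑ G, if F * G = C then u F * v G else 0 := by
        simp only [mulT_apply, sum_filter]
    _ = ∑ F, ∑ G, ∑ C with p C, if F * G = C then u F * v G else 0 := by
        rw [sum_comm]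
        exact sum_congr rfl fun F _ => sum_comm
    _ = ∑ F, ∑ G, if p (F * G) then u F * v G else 0 := by
        simp only [sum_ite_eq, mem_filter_univ]

open Classical in
/-- The character of the Tits algebra attached to a flat `X`: the linear extension of
`H_F ↦ 1` if `supp F ⊆ X` and `H_F ↦ 0` otherwise, evaluated on coefficient vectors. -/
def flatCharacter (X : Flat 𝒜) (w : Face 𝒜 → ℝ) : ℝ :=
  ∑ F, if (supp 𝒜 F).1 ⊆ X.1 then w F else 0

theorem flatCharacter_mulT (X : Flat 𝒜) (u v : Face 𝒜 → ℝ) :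
    flatCharacter X (mulT 𝒜 u v) = flatCharacter X u * flatCharacter X v := by
  classical
  calc
    flatCharacter X (mulT 𝒜 u v)
      = ∑ F, ∑ G, if (supp 𝒜 (F * G)).1 ⊆ X.1 then u F * v G else 0 :=
        sum_ite_mulT u v fun F => (supp 𝒜 F).1 ⊆ X.1
    _ = ∑ F, ∑ G, (if (supp 𝒜 F).1 ⊆ X.1 then u F else 0) *
          (if (supp 𝒜 G).1 ⊆ X.1 then v G else 0) := by
        simp only [ite_zero_mul_ite_zero, Face.supp_mul_subset_iff]
    _ = flatCharacter X u * flatCharacter X v := (sum_mul_sum _ _ _ _).symm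

/-- **Lemma (multiplicativity of characteristic elements).**
If `u` is characteristic of parameter `s` and `v` is characteristic of parameter `t`,
then `uv` is characteristic of parameter `st`. -/
theorem mul_isCharacteristic {n : ℕ} (𝒜 : Finset (AffForm n))
    (h𝒜 : ∀ ℓ ∈ 𝒜, ℓ.linear ≠ 0)
    (d : ℕ) (hd : ∀ X : Flat 𝒜, IsMin X → dimS X.1 = d)
    (u v : Face 𝒜 → ℝ) (s t : ℝ)
    (hu : IsCharacteristic 𝒜 d u s) (hv : IsCharacteristic 𝒜 d v t) :
    IsCharacteristic 𝒜 d (mulT 𝒜 u v) (s * t) := by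
  intro X
  calc
    flatCharacter X (mulT 𝒜 u v) = flatCharacter X u * flatCharacter X v :=
      flatCharacter_mulT X u v
    _ = s ^ (dimS X.1 - d) * t ^ (dimS X.1 - d) := congrArg₂ (· * ·) (hu X) (hv X)
    _ = (s * t) ^ (dimS X.1 - d) := (mul_pow s t _).symm

end CharElts
end
end

section
/- Let 𝒜' ⊆ 𝒜 be a subarrangement (a subset of the hyperplanes of 𝒜) with rk(𝒜') = rk(𝒜). Let f send each face F_σ of 𝒜 to the face of 𝒜' with sign vector σ restricted to 𝒜' (this is the unique face of 𝒜' whose relative interior contains the relative interior of F_σ), and extend f linearly to a map ℝΣ[𝒜] → ℝΣ[𝒜'], so that f(Σ_F w^F H_F) = Σ_G (Σ_{F : f(F) = G} w^F) H_G. Then for every t ∈ ℝ, if w ∈ ℝΣ[𝒜] is characteristic of parameter t for 𝒜, then f(w) is characteristic of parameter t for 𝒜'. -/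
open Finset MeasureTheory

noncomputable section

namespace CharElts

variable {n : ℕ} (𝒜 : Finset (AffForm n))

/-- The face of the subarrangement `𝒜' ⊆ 𝒜` whose relative interior contains the
relative interior of a given face of `𝒜`: restrict the sign vector to `𝒜'`. -/
def restrictFace {n : ℕ} (𝒜 𝒜' : Finset (AffForm n)) (hsub : 𝒜' ⊆ 𝒜) (F : Face 𝒜) :
    Face 𝒜' :=
  ⟨fun ℓ => F.sgn ⟨ℓ.1, hsub ℓ.2⟩, by
    obtain ⟨x, hx⟩ := F.nonempty
    exact ⟨x, fun ℓ => hx ⟨ℓ.1, hsub ℓ.2⟩⟩⟩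

open Classical in
/-- The induced linear map `ℝΣ[𝒜] → ℝΣ[𝒜']` on coefficient vectors:
`f(w)^G = Σ_{F : f(F) = G} w^F`. -/
def pushW {n : ℕ} (𝒜 𝒜' : Finset (AffForm n)) (hsub : 𝒜' ⊆ 𝒜) (w : Face 𝒜 → ℝ) :
    Face 𝒜' → ℝ :=
  fun G => ∑ F : Face 𝒜, if restrictFace 𝒜 𝒜' hsub F = G then w F else 0

/-!
A flat `X` contains the support of a face `F` exactly when it contains some, equivalently every,
point of `F`. A point of `F` also lies in the image of `F` under restriction to `𝒜'`, and every flat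
of `𝒜'` is a flat of `𝒜`. So for a flat `X` of `𝒜'`, the coefficients of `f(w)` summed by the
characteristic condition for `𝒜'` at `X` regroup into those of `w` summed by the condition for `𝒜`
at `X`. Both sums have the same prescribed value, because equal ranks force minimal flats of equal
dimension.
-/

section Support

variable {𝒜}

lemma Face.sgn_eq_zero_iff {F : Face 𝒜} {x : V n} (hx : x ∈ F.carrier) (ℓ : Idx 𝒜) :
    F.sgn ℓ = 0 ↔ x ∈ hypSet ℓ.1 := by
  rw [← hx ℓ]
  exact sign_eq_zero_iff

lemma Face.carrier_subset_supp_s2 (F : Face 𝒜) : F.carrier ⊆ (supp 𝒜 F).1 :=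
  fun _ hx => Set.mem_iInter₂.2 fun ℓ hℓ => (Face.sgn_eq_zero_iff hx ℓ).1 hℓ

lemma supp_subset_iff_mem {F : Face 𝒜} {x : V n} (hx : x ∈ F.carrier) (X : Flat 𝒜) :
    (supp 𝒜 F).1 ⊆ X.1 ↔ x ∈ X.1 := by
  refine ⟨fun h => h (F.carrier_subset_supp_s2 hx), fun hxX => ?_⟩
  rw [flat_eq_inter 𝒜 X]
  refine Set.subset_iInter₂ fun ℓ hℓ => ?_
  have hFℓ : F.sgn ℓ = 0 := (Face.sgn_eq_zero_iff hx ℓ).2 (hℓ hxX)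
  exact Set.biInter_subset_of_mem hFℓ

end Support

section Subarrangement

variable {𝒜} {𝒜' : Finset (AffForm n)}

lemma IsFlat.mono (hsub : 𝒜' ⊆ 𝒜) {X : Set (V n)} (hX : IsFlat 𝒜' X) : IsFlat 𝒜 X := by
  obtain ⟨hne, P, rfl⟩ := hX
  refine ⟨hne, fun ℓ => ∃ h : ℓ.1 ∈ 𝒜', P ⟨ℓ.1, h⟩, ?_⟩
  ext x
  simp only [Set.mem_iInter, Set.mem_ofPred_eq]
  exact ⟨fun h ℓ ⟨hℓ, hP⟩ => h ⟨ℓ.1, hℓ⟩ hP, fun h ℓ hP => h ⟨ℓ.1, hsub ℓ.2⟩ ⟨ℓ.2, hP⟩⟩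

lemma carrier_subset_carrier_restrictFace (hsub : 𝒜' ⊆ 𝒜) (F : Face 𝒜) :
    F.carrier ⊆ (restrictFace 𝒜 𝒜' hsub F).carrier :=
  fun _ hx ℓ => hx ⟨ℓ.1, hsub ℓ.2⟩

lemma supp_restrictFace_subset_iff (hsub : 𝒜' ⊆ 𝒜) (F : Face 𝒜) (X : Flat 𝒜') :
    (supp 𝒜' (restrictFace 𝒜 𝒜' hsub F)).1 ⊆ X.1 ↔ (supp 𝒜 F).1 ⊆ X.1 := by
  obtain ⟨x, hx⟩ : F.carrier.Nonempty := F.nonempty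
  exact (supp_subset_iff_mem (carrier_subset_carrier_restrictFace hsub F hx) X).trans
    (supp_subset_iff_mem hx ⟨X.1, X.2.mono hsub⟩).symm

open Classical in
lemma sum_pushW (hsub : 𝒜' ⊆ 𝒜) (w : Face 𝒜 → ℝ) (S : Finset (Face 𝒜')) :
    ∑ G ∈ S, pushW 𝒜 𝒜' hsub w G = ∑ F with restrictFace 𝒜 𝒜' hsub F ∈ S, w F := by
  simp only [pushW, ← Finset.sum_filter]
  exact Finset.sum_fiberwise_eq_sum_filter _ _ _ _

lemma IsCharacteristic.pushW (hsub : 𝒜' ⊆ 𝒜) {d : ℕ} {w : Face 𝒜 → ℝ} {t : ℝ}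
    (hw : IsCharacteristic 𝒜 d w t) : IsCharacteristic 𝒜' d (pushW 𝒜 𝒜' hsub w) t := by
  classical
  intro X
  rw [← hw ⟨X.1, X.2.mono hsub⟩, ← Finset.sum_filter, ← Finset.sum_filter, sum_pushW]
  simp only [Finset.mem_filter_univ, supp_restrictFace_subset_iff]

end Subarrangement

lemma dimS_le (X : Set (V n)) : dimS X ≤ n :=
  (Submodule.finrank_le _).trans_eq finrank_euclideanSpace_fin

lemma exists_isMin_flat : ∃ X : Flat 𝒜, IsMin X := by
  obtain ⟨X, hX⟩ :=
    exists_minimal_of_wellFoundedLT (fun _ : Flat 𝒜 => True) ⟨topFlat 𝒜, trivial⟩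
  exact ⟨X, minimal_true.1 hX⟩

variable {𝒜} in
lemma le_of_forall_isMin_dimS_eq {d : ℕ} (hd : ∀ X : Flat 𝒜, IsMin X → dimS X.1 = d) :
    d ≤ n := by
  obtain ⟨X, hX⟩ := exists_isMin_flat 𝒜
  exact hd X hX ▸ dimS_le X.1

/-- **Lemma (functoriality of characteristic elements).**
If `𝒜' ⊆ 𝒜` have the same rank, then the induced map `f : ℝΣ[𝒜] → ℝΣ[𝒜']` sends
characteristic elements of parameter `t` to characteristic elements of parameter `t`. -/
theorem pushW_isCharacteristic {n : ℕ} (𝒜 𝒜' : Finset (AffForm n)) (hsub : 𝒜' ⊆ 𝒜)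
    (h𝒜 : ∀ ℓ ∈ 𝒜, ℓ.linear ≠ 0)
    (d : ℕ) (hd : ∀ X : Flat 𝒜, IsMin X → dimS X.1 = d)
    (d' : ℕ) (hd' : ∀ X : Flat 𝒜', IsMin X → dimS X.1 = d')
    (hrank : n - d' = n - d)
    (t : ℝ) (w : Face 𝒜 → ℝ) (hw : IsCharacteristic 𝒜 d w t) :
    IsCharacteristic 𝒜' d' (pushW 𝒜 𝒜' hsub w) t := by
  have hdn : d ≤ n := le_of_forall_isMin_dimS_eq hd
  have hdn' : d' ≤ n := le_of_forall_isMin_dimS_eq hd'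
  obtain rfl : d = d' := by omega
  exact hw.pushW hsub

end CharElts
end
end
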